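/- Let Ω be a finite set with |Ω| = n and let 0 ≤ r1, r2 ≤ n. Then for every x' ∈ X_{r1} and x ∈ X_{r2}: (−1)^{|x ∩ x'|} = Σ_{s=0}^{N(r1,r2)} κ_s^{r1,r2} · λ_s^{r1,r2}(|x \ x'|; n), where N(r1,r2) = min(r1, n−r1, r2, n−r2) and κ_s^{r1,r2} = (−2)^s · [n−r1]_s · [r2]_s · P_{r1−s}(r2−s; n−2s) / (s! · [n−s+1]_s · binom(n−2s, r1−s)). Equivalently, the block of the Fourier transform F_X from functions on X_{r1} to functions on X_{r2} equals Σ_{s=0}^{N(r1,r2)} κ_s^{r1,r2} Λ_s^{r1,r2}, which is the kernel form of the decomposition F_X = Σ_{r1,r2} Σ_s k_s^{r1,r2} Λ̃_s^{r1,r2} with k_s^{r1,r2} = (−2)^s √(binom(n−2s,r2−s)/binom(n−2s,r1−s)) P_{r1−s}(r2−s; n−2s). -/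

import Mathlib

/-- Falling factorial `z(z-1)⋯(z-k+1)` for complex `z`. -/
noncomputable def cfall (z : ℂ) (k : ℕ) : ℂ := ∏ i ∈ Finset.range k, (z - i)

/-- Generalized binomial coefficient `binom(t, j)` for complex `t`. -/
noncomputable def cbinom (t : ℂ) (j : ℕ) : ℂ := cfall t j / (Nat.factorial j)

/-- The Hahn kernel `λ_s^{r1,r2}(t; n)`. -/
noncomputable def hahn (n r1 r2 s : ℕ) (t : ℂ) : ℂ :=
  ∑ j ∈ Finset.range (s + 1),
    (-1 : ℂ) ^ j * cbinom t j * cfall (s : ℂ) j * cfall ((n : ℂ) - s + 1) j /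
      (cfall ((n : ℂ) - r1) j * cfall (r2 : ℂ) j)

/-- The operator `Λ_s^{r1,r2} : (X_{r1} → ℂ) → (X_{r2} → ℂ)` with kernel
`λ_s^{r1,r2}(|x2 \ x1|; n)`. -/
noncomputable def Lam (Ω : Type*) [Fintype Ω] [DecidableEq Ω] (n r1 r2 s : ℕ)
    (ψ : {x : Finset Ω // x.card = r1} → ℂ) : {x : Finset Ω // x.card = r2} → ℂ :=
  fun x2 => ∑ x1 : {x : Finset Ω // x.card = r1},
    hahn n r1 r2 s ((((x2 : Finset Ω) \ (x1 : Finset Ω)).card : ℕ) : ℂ) * ψ x1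

/-- The Krawtchouk polynomial `P_m(k; N) = Σ_{j=0}^m (-1)^j binom(k,j) binom(N-k, m-j)`. -/
noncomputable def kraw (m k N : ℕ) : ℂ :=
  ∑ j ∈ Finset.range (m + 1), (-1 : ℂ) ^ j * (k.choose j : ℂ) * ((N - k).choose (m - j) : ℂ)

/-- The coefficient `κ_s^{r1,r2}` of the Fourier transform in the (unnormalized) basis
`Λ_s^{r1,r2}`. -/
noncomputable def kapCoef (n r1 r2 s : ℕ) : ℂ :=
  (-2 : ℂ) ^ s * cfall ((n : ℂ) - r1) s * cfall (r2 : ℂ) s *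
      kraw (r1 - s) (r2 - s) (n - 2 * s) /
    ((s.factorial : ℂ) * cfall ((n : ℂ) - s + 1) s * ((n - 2 * s).choose (r1 - s) : ℂ))

/-!
Write `t = |x \ x'|` and let `[·]_m` be the falling factorial. Since `|x ∩ x'| = r2 - t`, the sign
is `(-1)^r2 * (-1)^t`, and `(-1)^t = ∑ (-2)^m / m! * [t]_m` by the binomial theorem. Inverting the
triangular relation between the Hahn kernels and the `[t]_m` turns this into a combination of
kernels in which the coefficient of `λ_s` is, up to an explicit factor, a sum `₂F₁(·, ·; ·; 2)`:
a Krawtchouk polynomial divided by its binomial coefficient. The kernels have poles unless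
`m ≤ n - r1` and `m ≤ r2`, and the inversion needs `2 * m ≤ n`, so this argument covers `r2 ≤ r1`.

For `r1 ≤ r2`, each summand `κ_s λ_s` is symmetric under exchanging `x` and `x'`: with its last
denominator cleared, the kernel is a function of the sizes of the four cells `x \ x'`, `x' \ x`,
`Ω \ (x ∪ x')`, `x ∩ x'` that is symmetric in the first two.
-/

open Finset Polynomial
open scoped Nat

section FallingFactorial

variable (z : ℂ) (m j k : ℕ)

@[simp]
lemma cfall_zero : cfall z 0 = 1 := prod_range_zero _

lemma cfall_succ : cfall z (k + 1) = cfall z k * (z - k) := prod_range_succ _ _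

lemma cfall_add : cfall z (j + k) = cfall z j * cfall (z - j) k := by
  simp only [cfall, prod_range_add, Nat.cast_add, sub_sub]

lemma cfall_succ_left : cfall z (k + 1) = z * cfall (z - 1) k := by
  rw [add_comm, cfall_add, cfall_succ]
  simp

lemma cfall_natCast : cfall (m : ℂ) k = m.descFactorial k := by
  rw [cfall, ← descPochhammer_eval_eq_prod_range, descPochhammer_eval_eq_descFactorial]

lemma cfall_natCast_eq_factorial_mul_choose : cfall (m : ℂ) k = k ! * m.choose k := by
  rw [cfall_natCast, Nat.descFactorial_eq_factorial_mul_choose, Nat.cast_mul]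

variable {z m j k}

lemma cfall_natCast_eq_zero (h : m < k) : cfall (m : ℂ) k = 0 := by
  rw [cfall_natCast, Nat.descFactorial_eq_zero_iff_lt.2 h, Nat.cast_zero]

lemma cfall_natCast_ne_zero (h : k ≤ m) : cfall (m : ℂ) k ≠ 0 := by
  rw [cfall_natCast, Nat.cast_ne_zero, Ne, Nat.descFactorial_eq_zero_iff_lt]
  exact h.not_gt

lemma cfall_ne_zero_of_le (h : j ≤ k) (hz : cfall z k ≠ 0) : cfall z j ≠ 0 := by
  obtain ⟨l, rfl⟩ := Nat.exists_eq_add_of_le h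
  exact left_ne_zero_of_mul (cfall_add z j l ▸ hz)

end FallingFactorial

section SymmetricForm

/-- The kernel `∑ (-1)^i binom(s, i) [t]_i [u]_i [p]_j [q]_j` over `i + j = s`. It is the Hahn
kernel without its denominators, as a function of the sizes `t = |x \ x'|`, `u = |x' \ x|`,
`p = |Ω \ (x ∪ x')|`, `q = |x ∩ x'|` of the four cells cut out by `x` and `x'`. -/
noncomputable def cellHahn (s : ℕ) (t u p q : ℂ) : ℂ :=
  ∑ ij ∈ antidiagonal s, (s.choose ij.1 : ℂ) *
    ((-1) ^ ij.1 * (cfall t ij.1 * cfall u ij.1) * (cfall p ij.2 * cfall q ij.2))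

lemma cellHahn_comm (s : ℕ) (t u p q : ℂ) : cellHahn s t u p q = cellHahn s u t p q := by
  simp only [cellHahn, mul_comm (cfall t _)]

lemma cellHahn_succ (s : ℕ) (t u p q : ℂ) :
    cellHahn (s + 1) t u p q =
      p * q * cellHahn s t u (p - 1) (q - 1) - t * u * cellHahn s (t - 1) (u - 1) p q := by
  rw [cellHahn, Finset.sum_antidiagonal_choose_succ_mul (fun i j ↦
    (-1) ^ i * (cfall t i * cfall u i) * (cfall p j * cfall q j)), sub_eq_add_neg]
  congr 1
  · rw [cellHahn, mul_sum]
    refine sum_congr rfl fun ij _ ↦ ?_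
    rw [cfall_succ_left p, cfall_succ_left q]
    ring
  · rw [cellHahn, mul_sum, ← sum_neg_distrib]
    refine sum_congr rfl fun ij hij ↦ ?_
    rw [cfall_succ_left t, cfall_succ_left u,
      Nat.choose_symm_of_eq_add (mem_antidiagonal.1 hij).symm]
    ring

/-- The Hahn kernel `λ_s^{r1,r2}(t; n)` multiplied by its last denominator `[a]_s [b]_s`, where
`a = n - r1` and `b = r2`; unlike the kernel itself it makes sense for all complex parameters. -/
noncomputable def clearedHahn (n a b : ℂ) (s : ℕ) (t : ℂ) : ℂ :=
  ∑ ij ∈ antidiagonal s, (s.choose ij.1 : ℂ) * cfall (n - s + 1) ij.1 *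
    ((-1) ^ ij.1 * cfall t ij.1 * (cfall (a - ij.1) ij.2 * cfall (b - ij.1) ij.2))

lemma choose_mul_cfall_succ (z : ℂ) {s i j : ℕ} (h : i + j = s) :
    ((s + 1).choose (i + 1) : ℂ) * cfall z (i + 1) =
      s.choose (i + 1) * cfall (z - 1) (i + 1) + s.choose i * (z + j) * cfall (z - 1) i := by
  have hchoose : (s.choose (i + 1) : ℂ) * (i + 1) = s.choose i * j := by
    rw [← Nat.cast_add_one, ← Nat.cast_mul, Nat.choose_succ_right_eq, Nat.cast_mul,
      show s - i = j by omega]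
  rw [Nat.choose_succ_succ', Nat.cast_add, cfall_succ_left, cfall_succ]
  linear_combination cfall (z - 1) i * hchoose

lemma sum_antidiagonal_choose_mul_cfall_succ (z : ℂ) (s : ℕ) (w : ℕ → ℕ → ℂ) :
    ∑ ij ∈ antidiagonal (s + 1), ((s + 1).choose ij.1 : ℂ) * cfall z ij.1 * w ij.1 ij.2 =
      ∑ ij ∈ antidiagonal s, (s.choose ij.1 : ℂ) * cfall (z - 1) ij.1 *
        (w ij.1 (ij.2 + 1) + (z + ij.2) * w (ij.1 + 1) ij.2) := by
  have hshift : ∑ ij ∈ antidiagonal s, (s.choose ij.1 : ℂ) * cfall (z - 1) ij.1 *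
      w ij.1 (ij.2 + 1) = w 0 (s + 1) + ∑ ij ∈ antidiagonal s,
        (s.choose (ij.1 + 1) : ℂ) * cfall (z - 1) (ij.1 + 1) * w (ij.1 + 1) ij.2 := by
    have hsucc := Nat.sum_antidiagonal_succ (n := s)
      (f := fun ij ↦ (s.choose ij.1 : ℂ) * cfall (z - 1) ij.1 * w ij.1 ij.2)
    rw [Nat.sum_antidiagonal_succ'] at hsucc
    simpa using hsucc
  simp only [mul_add, sum_add_distrib]
  rw [hshift, Nat.sum_antidiagonal_succ, add_assoc, ← sum_add_distrib]
  congr 1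
  · simp
  · refine sum_congr rfl fun ij hij ↦ ?_
    rw [choose_mul_cfall_succ z (mem_antidiagonal.1 hij)]
    ring

lemma clearedHahn_succ (n a b : ℂ) (s : ℕ) (t : ℂ) :
    clearedHahn n a b (s + 1) t =
      (a - t) * (b - t) * clearedHahn (n - 2) (a - 1) (b - 1) s t -
        t * (n - a - b + t) * clearedHahn (n - 2) (a - 1) (b - 1) s (t - 1) := by
  rw [clearedHahn, sum_antidiagonal_choose_mul_cfall_succ _ s (fun i j ↦
    (-1) ^ i * cfall t i * (cfall (a - i) j * cfall (b - i) j))]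
  simp only [clearedHahn, mul_sum]
  rw [← sum_sub_distrib]
  refine sum_congr rfl fun ij hij ↦ ?_
  obtain ⟨i, j⟩ := ij
  obtain rfl : i + j = s := mem_antidiagonal.1 hij
  have hshift (c : ℂ) : c - (i + 1 : ℕ) = c - 1 - i := by push_cast; ring
  have ht : t * cfall (t - 1) i = cfall t i * (t - i) := by rw [← cfall_succ_left, cfall_succ]
  rw [cfall_succ_left (a - i), cfall_succ_left (b - i), cfall_succ t, hshift, hshift,
    sub_right_comm a, sub_right_comm b,
    show n - (i + j + 1 : ℕ) + 1 - 1 = n - 2 - (i + j : ℕ) + 1 by push_cast; ring]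
  push_cast
  linear_combination (n - a - b + t) * ((i + j).choose i : ℂ) *
    cfall (n - 2 - (i + j) + 1) i * (-1) ^ i * cfall (a - 1 - i) j * cfall (b - 1 - i) j * ht

lemma clearedHahn_eq_cellHahn (n a b : ℂ) (s : ℕ) (t : ℂ) :
    clearedHahn n a b s t = cellHahn s t (n - a - b + t) (a - t) (b - t) := by
  induction s generalizing n a b t with
  | zero => simp [clearedHahn, cellHahn]
  | succ s ih =>
    rw [clearedHahn_succ, cellHahn_succ, ih, ih]
    ring_nf

lemma cfall_mul_cfall_mul_hahn {n r1 r2 s : ℕ} (h1 : cfall ((n : ℂ) - r1) s ≠ 0)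
    (h2 : cfall (r2 : ℂ) s ≠ 0) (t : ℂ) :
    cfall ((n : ℂ) - r1) s * cfall (r2 : ℂ) s * hahn n r1 r2 s t =
      clearedHahn n (n - r1) r2 s t := by
  rw [hahn, mul_sum, clearedHahn, Nat.sum_antidiagonal_eq_sum_range_succ_mk]
  refine sum_congr rfl fun j hj ↦ ?_
  obtain ⟨k, rfl⟩ := Nat.exists_eq_add_of_le (mem_range_succ_iff.1 hj)
  have hj1 := cfall_ne_zero_of_le (Nat.le_add_right j k) h1
  have hj2 := cfall_ne_zero_of_le (Nat.le_add_right j k) h2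
  have hfact : (j ! : ℂ) ≠ 0 := Nat.cast_ne_zero.2 j.factorial_ne_zero
  rw [cbinom, cfall_natCast_eq_factorial_mul_choose (j + k) j, cfall_add _ j k,
    cfall_add (r2 : ℂ) j k, Nat.add_sub_cancel_left]
  field_simp

end SymmetricForm

section Inversion

lemma choose_succ_mul_div_cfall {w : ℂ} {p : ℕ} (hw : cfall w (p + 2) ≠ 0) (i : ℕ) :
    ((p + 1).choose (i + 1) : ℂ) * (w - (i + 1)) / cfall w (p + 2) =
      p.choose (i + 1) / cfall (w - 1) (p + 1) + p.choose i / cfall w (p + 1) := by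
  have hleft : cfall w (p + 2) = w * cfall (w - 1) (p + 1) := cfall_succ_left w (p + 1)
  have hright : cfall w (p + 2) = cfall w (p + 1) * (w - (p + 1 : ℕ)) := cfall_succ w (p + 1)
  have hinv_left : 1 / cfall (w - 1) (p + 1) = w / cfall w (p + 2) := by
    rw [hleft] at hw ⊢
    rw [div_mul_cancel_left₀ (left_ne_zero_of_mul hw), one_div]
  have hinv_right : 1 / cfall w (p + 1) = (w - (p + 1 : ℕ)) / cfall w (p + 2) := by
    rw [hright] at hw ⊢
    rw [div_mul_cancel_right₀ (right_ne_zero_of_mul hw), one_div]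
  have hpascal : ((p + 1).choose (i + 1) : ℂ) = p.choose i + p.choose (i + 1) := by
    exact_mod_cast Nat.choose_succ_succ' p i
  have habsorb : (p + 1 : ℂ) * p.choose i = (p + 1).choose (i + 1) * (i + 1) := by
    exact_mod_cast Nat.add_one_mul_choose_eq p i
  rw [div_eq_mul_one_div _ (cfall (w - 1) _), div_eq_mul_one_div _ (cfall w (p + 1)),
    hinv_left, hinv_right, mul_div_assoc', mul_div_assoc', ← add_div]
  push_cast
  congr 1
  linear_combination w * hpascal + habsorb

lemma sum_neg_one_pow_choose_mul_div_cfall {M : ℂ} {p : ℕ}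
    (hM : ∀ i ≤ p, cfall (M - i) (p + 1) ≠ 0) :
    ∑ i ∈ range (p + 1), (-1) ^ i * (p.choose i : ℂ) * (M - 2 * i) / cfall (M - i) (p + 1) =
      if p = 0 then 1 else 0 := by
  rcases p with - | p
  · have hM0 : M ≠ 0 := by simpa [cfall_succ] using hM 0 le_rfl
    simp [cfall_succ, hM0]
  let T (i : ℕ) : ℂ := (-1) ^ i * p.choose i / cfall (M - i - 1) (p + 1)
  have htelescope : ∀ i ∈ range (p + 1), (-1) ^ (i + 1) * ((p + 1).choose (i + 1) : ℂ) *
      (M - 2 * (i + 1 : ℕ)) / cfall (M - (i + 1 : ℕ)) (p + 2) = T (i + 1) - T i := fun i hi ↦ by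
    have hw : M - (i + 1 : ℕ) = M - i - 1 := by push_cast; ring
    have hne := hM (i + 1) (mem_range.1 hi)
    have hstep := choose_succ_mul_div_cfall hne i
    simp only [T]
    rw [hw] at hstep ⊢
    rw [pow_succ, show M - 2 * ((i + 1 : ℕ) : ℂ) = M - i - 1 - (i + 1) by push_cast; ring]
    linear_combination (-(-1) ^ i) * hstep
  have hzero : (-1) ^ 0 * ((p + 1).choose 0 : ℂ) * (M - 2 * (0 : ℕ)) /
      cfall (M - (0 : ℕ)) (p + 2) = T 0 := by
    have hne := hM 0 (Nat.zero_le _)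
    rw [Nat.cast_zero, sub_zero, cfall_succ_left] at hne
    simp [T, cfall_succ_left M, div_mul_cancel_left₀ (left_ne_zero_of_mul hne)]
  rw [sum_range_succ', sum_congr rfl htelescope, hzero, sum_range_sub, sub_add_cancel]
  simp [T]

lemma choose_mul_cfall_add (j p i : ℕ) :
    ((j + p).choose (j + i) : ℂ) * cfall (j + i : ℕ) j = cfall (j + p : ℕ) j * p.choose i := by
  have h : ((j + p).choose (j + i) : ℂ) * (j + i).choose j = (j + p).choose j * p.choose i := by
    simpa using congrArg (Nat.cast : ℕ → ℂ)
      (Nat.choose_mul (n := j + p) (Nat.le_add_right j i))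
  rw [cfall_natCast_eq_factorial_mul_choose, cfall_natCast_eq_factorial_mul_choose]
  linear_combination (j ! : ℂ) * h

lemma sum_neg_one_pow_choose_mul_cfall_mul_cfall_div {z : ℂ} {j m : ℕ} (hjm : j ≤ m)
    (hz : ∀ s ≤ m, cfall (z - s) (m + 1) ≠ 0) :
    ∑ s ∈ range (m + 1), (-1) ^ s * (m.choose s : ℂ) * (z - 2 * s) / cfall (z - s) (m + 1) *
      (cfall s j * cfall (z - s) j) = if j = m then (-1) ^ m * (m ! : ℂ) else 0 := by
  obtain ⟨p, rfl⟩ := Nat.exists_eq_add_of_le hjm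
  have hvanish : ∀ s ∈ range j, (-1) ^ s * ((j + p).choose s : ℂ) * (z - 2 * s) /
      cfall (z - s) (j + p + 1) * (cfall s j * cfall (z - s) j) = 0 := fun s hs ↦ by
    rw [cfall_natCast_eq_zero (mem_range.1 hs), zero_mul, mul_zero]
  have hsplit (i : ℕ) : cfall (z - (j + i : ℕ)) (j + p + 1) =
      cfall (z - (j + i : ℕ)) j * cfall (z - 2 * j - i) (p + 1) := by
    rw [add_assoc, cfall_add]
    congr 2
    push_cast
    ring
  have hM (i : ℕ) (hi : i ≤ p) : cfall (z - 2 * j - i) (p + 1) ≠ 0 :=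
    right_ne_zero_of_mul (hsplit i ▸ hz (j + i) (by omega))
  have hterm : ∀ i ∈ range (p + 1), (-1) ^ (j + i) * ((j + p).choose (j + i) : ℂ) *
      (z - 2 * (j + i : ℕ)) / cfall (z - (j + i : ℕ)) (j + p + 1) *
        (cfall (j + i : ℕ) j * cfall (z - (j + i : ℕ)) j) =
      (-1) ^ j * cfall (j + p : ℕ) j * ((-1) ^ i * (p.choose i : ℂ) * (z - 2 * j - 2 * i) /
        cfall (z - 2 * j - i) (p + 1)) := fun i hi ↦ by
    have hi := mem_range_succ_iff.1 hi
    have hne := hz (j + i) (by omega)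
    rw [hsplit] at hne ⊢
    have hne1 := left_ne_zero_of_mul hne
    have hne2 := hM i hi
    rw [show z - 2 * ((j + i : ℕ) : ℂ) = z - 2 * j - 2 * i by push_cast; ring, pow_add]
    field_simp
    linear_combination (z - 2 * j - 2 * i) * choose_mul_cfall_add j p i
  rw [add_assoc, sum_range_add, ← add_assoc, sum_eq_zero hvanish, zero_add, sum_congr rfl hterm,
    ← mul_sum, sum_neg_one_pow_choose_mul_div_cfall hM]
  rcases eq_or_ne p 0 with rfl | hp
  · simp [cfall_natCast, Nat.descFactorial_self]
  · simp [hp]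

lemma hahn_eq_sum_range_of_le (n r1 r2 : ℕ) {s m : ℕ} (h : s ≤ m) (t : ℂ) :
    hahn n r1 r2 s t = ∑ j ∈ range (m + 1), (-1) ^ j * cbinom t j * cfall s j *
      cfall ((n : ℂ) - s + 1) j / (cfall ((n : ℂ) - r1) j * cfall r2 j) := by
  refine sum_subset (range_mono (by omega)) fun j _ hj ↦ ?_
  rw [cfall_natCast_eq_zero (by simpa using hj)]
  simp

/-- The inverse of the relation defining the Hahn kernels, which writes `[t]_m` in terms of
`λ_0, …, λ_m`. -/
theorem sum_mul_hahn_eq_cfall_div {n m : ℕ} (hm : 2 * m ≤ n) (r1 r2 : ℕ) (t : ℂ) :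
    ∑ s ∈ range (m + 1), (-1) ^ s * (m.choose s : ℂ) * (n - 2 * s + 1) /
      cfall ((n : ℂ) - s + 1) (m + 1) * hahn n r1 r2 s t =
        cfall t m / (cfall ((n : ℂ) - r1) m * cfall r2 m) := by
  have hne : ∀ s ≤ m, cfall ((n : ℂ) + 1 - s) (m + 1) ≠ 0 := fun s hs ↦ by
    rw [← Nat.cast_add_one, ← Nat.cast_sub (by omega)]
    exact cfall_natCast_ne_zero (by omega)
  have hterm : ∀ s ∈ range (m + 1), (-1) ^ s * (m.choose s : ℂ) * (n - 2 * s + 1) /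
      cfall ((n : ℂ) - s + 1) (m + 1) * hahn n r1 r2 s t =
      ∑ j ∈ range (m + 1), (-1) ^ j * cbinom t j / (cfall ((n : ℂ) - r1) j * cfall r2 j) *
        ((-1) ^ s * (m.choose s : ℂ) * (n + 1 - 2 * s) / cfall ((n : ℂ) + 1 - s) (m + 1) *
          (cfall s j * cfall ((n : ℂ) + 1 - s) j)) := fun s hs ↦ by
    rw [hahn_eq_sum_range_of_le n r1 r2 (mem_range_succ_iff.1 hs), mul_sum]
    refine sum_congr rfl fun j _ ↦ ?_
    rw [sub_add_eq_add_sub, sub_add_eq_add_sub]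
    ring
  rw [sum_congr rfl hterm, sum_comm]
  simp only [← mul_sum]
  rw [sum_congr rfl fun j hj ↦ by
    rw [sum_neg_one_pow_choose_mul_cfall_mul_cfall_div (mem_range_succ_iff.1 hj) hne]]
  have hfact : (m ! : ℂ) ≠ 0 := Nat.cast_ne_zero.2 m.factorial_ne_zero
  have hsign : (-1 : ℂ) ^ m * (-1) ^ m = 1 := by rw [← mul_pow]; simp
  simp only [mul_ite, mul_zero, sum_ite_eq', mem_range, Nat.lt_succ_self, if_true, cbinom]
  rw [div_mul_eq_mul_div]
  congr 1
  field_simp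
  linear_combination cfall t m * hsign

end Inversion

section Krawtchouk

/-- The normalized Krawtchouk polynomial `P_m(k; N) / binom(N, m)`, encoded as the terminating
hypergeometric sum `₂F₁(-m, -k; -N; 2)`, which is symmetric in `m` and `k`. -/
noncomputable def normKraw (N m k : ℕ) : ℂ :=
  ∑ i ∈ range (min m k + 1), (-2) ^ i * (cfall m i * cfall k i) / (cfall N i * i !)

lemma normKraw_comm (N m k : ℕ) : normKraw N m k = normKraw N k m := by
  simp only [normKraw, min_comm m k, mul_comm (cfall m _)]

lemma coeff_one_sub_X_pow (k j : ℕ) : ((1 - X : ℂ[X]) ^ k).coeff j = (-1) ^ j * k.choose j := by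
  have hcomp : (1 - X : ℂ[X]) ^ k = ((1 + X : ℂ[X]) ^ k).comp (C (-1) * X) := by
    simp [sub_eq_add_neg]
  rw [hcomp, comp_C_mul_X_coeff, coeff_one_add_X_pow, mul_comm]

lemma kraw_eq_coeff (m k N : ℕ) :
    kraw m k N = ((1 - X : ℂ[X]) ^ k * (1 + X) ^ (N - k)).coeff m := by
  simp only [coeff_mul, coeff_one_sub_X_pow, coeff_one_add_X_pow,
    Nat.sum_antidiagonal_eq_sum_range_succ_mk, kraw]

lemma kraw_eq_sum {k N : ℕ} (hk : k ≤ N) (m : ℕ) :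
    kraw m k N = ∑ i ∈ range (min m k + 1),
      (-2) ^ i * (k.choose i * (N - i).choose (m - i) : ℂ) := by
  have hexpand : (1 - X : ℂ[X]) ^ k * (1 + X) ^ (N - k) =
      ∑ i ∈ range (k + 1), X ^ i * (C ((-2) ^ i * (k.choose i : ℂ)) * (1 + X) ^ (N - i)) := by
    have hsub : (1 - X : ℂ[X]) = C (-2) * X + (1 + X) := by
      rw [map_neg, map_ofNat]
      ring
    rw [hsub, add_pow, sum_mul]
    refine sum_congr rfl fun i hi ↦ ?_
    rw [show N - i = k - i + (N - k) by have := mem_range_succ_iff.1 hi; omega, pow_add, mul_pow]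
    simp only [map_mul, map_pow, map_natCast]
    ring
  rw [kraw_eq_coeff, hexpand, finsetSum_coeff]
  simp only [coeff_X_pow_mul', coeff_C_mul, coeff_one_add_X_pow]
  rw [← sum_filter]
  refine sum_congr ?_ fun i _ ↦ mul_assoc _ _ _
  ext i
  simp only [mem_filter, mem_range]
  omega

lemma choose_mul_cfall_div {N m i : ℕ} (hm : m ≤ N) (hi : i ≤ m) :
    (N.choose m : ℂ) * (cfall m i / cfall N i) = (N - i).choose (m - i) := by
  have h : (N.choose m : ℂ) * m.choose i = N.choose i * (N - i).choose (m - i) := by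
    exact_mod_cast Nat.choose_mul hi
  rw [mul_div_assoc', div_eq_iff (cfall_natCast_ne_zero (hi.trans hm)),
    cfall_natCast_eq_factorial_mul_choose, cfall_natCast_eq_factorial_mul_choose]
  linear_combination (i ! : ℂ) * h

lemma kraw_eq_choose_mul_normKraw {m k N : ℕ} (hm : m ≤ N) (hk : k ≤ N) :
    kraw m k N = N.choose m * normKraw N m k := by
  rw [kraw_eq_sum hk, normKraw, mul_sum]
  refine sum_congr rfl fun i hi ↦ ?_
  have hi : i ≤ m := by have := mem_range_succ_iff.1 hi; omega
  have hfact : (i ! : ℂ) ≠ 0 := Nat.cast_ne_zero.2 i.factorial_ne_zero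
  rw [← choose_mul_cfall_div hm hi, cfall_natCast_eq_factorial_mul_choose k]
  field_simp

lemma kraw_sub {k N : ℕ} (hk : k ≤ N) (m : ℕ) :
    kraw m (N - k) N = (-1) ^ m * kraw m k N := by
  rw [kraw, kraw, ← sum_flip, mul_sum, Nat.sub_sub_self hk]
  refine sum_congr rfl fun j hj ↦ ?_
  obtain ⟨l, rfl⟩ := Nat.exists_eq_add_of_le (mem_range_succ_iff.1 hj)
  have hsign : (-1 : ℂ) ^ j * (-1) ^ j = 1 := by rw [← mul_pow]; simp
  rw [Nat.add_sub_cancel_left, Nat.add_sub_cancel, pow_add]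
  linear_combination -((-1) ^ l * (k.choose j : ℂ) * (N - k).choose l) * hsign

lemma normKraw_sub_left {m k N : ℕ} (hm : m ≤ N) (hk : k ≤ N) :
    normKraw N (N - m) k = (-1) ^ k * normKraw N m k := by
  have hchoose : (N.choose k : ℂ) ≠ 0 := Nat.cast_ne_zero.2 (Nat.choose_pos hk).ne'
  have hsub := kraw_sub hm k
  rw [kraw_eq_choose_mul_normKraw hk (Nat.sub_le _ _), kraw_eq_choose_mul_normKraw hk hm] at hsub
  rw [normKraw_comm, normKraw_comm N m]
  apply mul_left_cancel₀ hchoose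
  linear_combination hsub

end Krawtchouk

section Fourier

lemma kapCoef_eq {n r1 r2 s : ℕ} (h1 : s ≤ r1) (h1' : r1 + s ≤ n) (h2 : s ≤ r2)
    (h2' : r2 + s ≤ n) :
    kapCoef n r1 r2 s = (-2) ^ s * normKraw (n - 2 * s) (r1 - s) (r2 - s) /
      (s ! * cfall ((n : ℂ) - s + 1) s) * (cfall ((n : ℂ) - r1) s * cfall r2 s) := by
  have hchoose : ((n - 2 * s).choose (r1 - s) : ℂ) ≠ 0 :=
    Nat.cast_ne_zero.2 (Nat.choose_pos (by omega)).ne'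
  rw [kapCoef, kraw_eq_choose_mul_normKraw (by omega) (by omega),
    ← mul_div_mul_right ((-2) ^ s * _) _ hchoose, div_mul_eq_mul_div]
  congr 1
  ring

lemma kapCoef_mul_hahn_eq_cellHahn {n r1 r2 s : ℕ} (h1 : s ≤ r1) (h1' : r1 + s ≤ n)
    (h2 : s ≤ r2) (h2' : r2 + s ≤ n) (t : ℂ) :
    kapCoef n r1 r2 s * hahn n r1 r2 s t =
      (-2) ^ s * normKraw (n - 2 * s) (r1 - s) (r2 - s) / (s ! * cfall ((n : ℂ) - s + 1) s) *
        cellHahn s t (t + r1 - r2) (n - r1 - t) (r2 - t) := by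
  have hne1 : cfall ((n : ℂ) - r1) s ≠ 0 := by
    rw [← Nat.cast_sub (by omega)]
    exact cfall_natCast_ne_zero (by omega)
  rw [kapCoef_eq h1 h1' h2 h2', mul_assoc,
    cfall_mul_cfall_mul_hahn hne1 (cfall_natCast_ne_zero h2), clearedHahn_eq_cellHahn]
  ring_nf

lemma kapCoef_mul_hahn_comm {n r1 r2 s : ℕ} (h1 : s ≤ r1) (h1' : r1 + s ≤ n)
    (h2 : s ≤ r2) (h2' : r2 + s ≤ n) {t u : ℂ} (h : t + r1 = u + r2) :
    kapCoef n r1 r2 s * hahn n r1 r2 s t = kapCoef n r2 r1 s * hahn n r2 r1 s u := by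
  obtain rfl : u = t + r1 - r2 := by linear_combination -h
  rw [kapCoef_mul_hahn_eq_cellHahn h1 h1' h2 h2', kapCoef_mul_hahn_eq_cellHahn h2 h2' h1 h1',
    normKraw_comm, cellHahn_comm]
  ring_nf

lemma neg_one_pow_eq_sum_cfall {t N : ℕ} (h : t ≤ N) :
    (-1 : ℂ) ^ t = ∑ m ∈ range (N + 1), (-2) ^ m / (m ! : ℂ) * cfall t m := by
  have hbinom : (-1 : ℂ) ^ t = ∑ m ∈ range (t + 1), (-2) ^ m / (m ! : ℂ) * cfall t m := by
    rw [show (-1 : ℂ) = -2 + 1 by norm_num, add_pow]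
    refine sum_congr rfl fun m _ ↦ ?_
    have hfact : (m ! : ℂ) ≠ 0 := Nat.cast_ne_zero.2 m.factorial_ne_zero
    rw [one_pow, cfall_natCast_eq_factorial_mul_choose]
    field_simp
  rw [hbinom]
  refine sum_subset (range_mono (by omega)) fun m _ hm ↦ ?_
  rw [cfall_natCast_eq_zero (by simpa using hm), mul_zero]

/- The coefficient of `[t]_m` in `(-1)^t` times that of `λ_s` in `[t]_m`, for `m = s + i`: a factor
depending on `s` only, times the `i`-th term of a `normKraw`. -/
lemma neg_two_pow_mul_inverse_hahn_coeff {n s i : ℕ} (h : 2 * s ≤ n) (a b : ℂ) :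
    (-2) ^ (s + i) / ((s + i)! : ℂ) * (cfall a (s + i) * cfall b (s + i)) *
      ((-1) ^ s * ((s + i).choose s : ℂ) * (n - 2 * s + 1) /
        cfall ((n : ℂ) - s + 1) (s + i + 1)) =
      2 ^ s / (s ! * cfall ((n : ℂ) - s + 1) s) * (cfall a s * cfall b s) *
        ((-2) ^ i * (cfall (a - s) i * cfall (b - s) i) /
          (cfall ((n - 2 * s : ℕ) : ℂ) i * i !)) := by
  have hmid : (n : ℂ) - 2 * s + 1 ≠ 0 := by
    rw [← Nat.cast_ofNat, ← Nat.cast_mul, ← Nat.cast_sub h]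
    exact Nat.cast_add_one_ne_zero _
  have hden : cfall ((n : ℂ) - s + 1) (s + i + 1) =
      cfall ((n : ℂ) - s + 1) s * ((n - 2 * s + 1) * cfall ((n - 2 * s : ℕ) : ℂ) i) := by
    rw [add_assoc, cfall_add, cfall_succ_left, Nat.cast_sub h]
    push_cast
    ring_nf
  have hchoose : ((s + i).choose s : ℂ) / (s + i)! = 1 / (s ! * i !) := by
    rw [Nat.cast_add_choose]
    have hfact : ((s + i)! : ℂ) ≠ 0 := Nat.cast_ne_zero.2 (s + i).factorial_ne_zero
    field_simp
  have hpow : (-2 : ℂ) ^ (s + i) * (-1) ^ s = 2 ^ s * (-2) ^ i := by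
    rw [pow_add, mul_right_comm, ← mul_pow]
    norm_num
  have hcancel : (n - 2 * s + 1 : ℂ) / cfall ((n : ℂ) - s + 1) (s + i + 1) =
      1 / (cfall ((n : ℂ) - s + 1) s * cfall ((n - 2 * s : ℕ) : ℂ) i) := by
    rw [hden, mul_left_comm, div_mul_cancel_left₀ hmid, one_div]
  calc _ = ((-2) ^ (s + i) * (-1) ^ s) * (((s + i).choose s : ℂ) / (s + i)!) *
        (cfall a (s + i) * cfall b (s + i)) *
          ((n - 2 * s + 1) / cfall ((n : ℂ) - s + 1) (s + i + 1)) := by ring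
    _ = _ := by
      rw [hpow, hchoose, hcancel, cfall_add, cfall_add b]
      ring

lemma sum_normKraw_mul_hahn {n a r1 r2 t : ℕ} (ha : a + r1 = n) (h21 : r2 ≤ r1)
    (hta : t ≤ a) (ht2 : t ≤ r2) :
    ∑ s ∈ range (min a r2 + 1), 2 ^ s / (s ! * cfall ((n : ℂ) - s + 1) s) *
      (cfall a s * cfall r2 s) * normKraw (n - 2 * s) (a - s) (r2 - s) * hahn n r1 r2 s t =
        (-1) ^ t := by
  have hcast : (n : ℂ) - r1 = a := by rw [← ha]; push_cast; ring
  let F (s i : ℕ) : ℂ := (-2) ^ (s + i) / ((s + i)! : ℂ) *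
    (cfall a (s + i) * cfall r2 (s + i)) * ((-1) ^ s * ((s + i).choose s : ℂ) * (n - 2 * s + 1) /
      cfall ((n : ℂ) - s + 1) (s + i + 1)) * hahn n r1 r2 s t
  have hinv : ∀ m ∈ range (min a r2 + 1), (-2) ^ m / (m ! : ℂ) * cfall t m =
      ∑ s ∈ range (m + 1), F s (m - s) := fun m hm ↦ by
    have hm := mem_range_succ_iff.1 hm
    have hne1 : cfall (a : ℂ) m ≠ 0 := cfall_natCast_ne_zero (by omega)
    have hne2 : cfall (r2 : ℂ) m ≠ 0 := cfall_natCast_ne_zero (by omega)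
    have hinverse := sum_mul_hahn_eq_cfall_div (show 2 * m ≤ n by omega) r1 r2 t
    rw [hcast, eq_div_iff (mul_ne_zero hne1 hne2)] at hinverse
    rw [← hinverse, sum_mul, mul_sum]
    refine sum_congr rfl fun s hs ↦ ?_
    simp only [F, Nat.add_sub_cancel' (mem_range_succ_iff.1 hs)]
    ring
  rw [neg_one_pow_eq_sum_cfall (le_min hta ht2), sum_congr rfl hinv, sum_range_diag_flip]
  refine sum_congr rfl fun s hs ↦ ?_
  have hs := mem_range_succ_iff.1 hs
  rw [normKraw, mul_sum, sum_mul, Nat.cast_sub (by omega), Nat.cast_sub (by omega)]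
  refine sum_congr (by congr 1; omega) fun i _ ↦ ?_
  simp only [F]
  rw [neg_two_pow_mul_inverse_hahn_coeff (by omega)]

theorem sum_kapCoef_mul_hahn {n r1 r2 t : ℕ} (h1 : r1 ≤ n) (h21 : r2 ≤ r1)
    (ht1 : t ≤ n - r1) (ht2 : t ≤ r2) :
    ∑ s ∈ range (min (n - r1) r2 + 1), kapCoef n r1 r2 s * hahn n r1 r2 s t =
      (-1) ^ (r2 - t) := by
  have hsign : (-1 : ℂ) ^ (r2 - t) = (-1) ^ r2 * (-1) ^ t := by
    rw [← pow_sub_mul_pow _ ht2, mul_assoc, ← mul_pow]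
    simp
  rw [hsign, ← sum_normKraw_mul_hahn (Nat.sub_add_cancel h1) h21 ht1 ht2, mul_sum]
  refine sum_congr rfl fun s hs ↦ ?_
  have hs := mem_range_succ_iff.1 hs
  have hpow : (-2 : ℂ) ^ s = (-1) ^ r2 * (2 ^ s * (-1) ^ (r2 - s)) := by
    rw [← pow_sub_mul_pow (-1 : ℂ) (show s ≤ r2 by omega), neg_pow 2 s]
    have hsq : (-1 : ℂ) ^ (r2 - s) * (-1) ^ (r2 - s) = 1 := by rw [← mul_pow]; simp
    linear_combination -((-1) ^ s * 2 ^ s) * hsq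
  rw [kapCoef_eq (by omega) (by omega) (by omega) (by omega),
    show n - r1 - s = n - 2 * s - (r1 - s) by omega, normKraw_sub_left (by omega) (by omega),
    hpow, Nat.cast_sub h1]
  ring

end Fourier

/-- Kernel form of the decomposition of the Fourier transform on the power set of `Ω`:
for `x' ∈ X_{r1}`, `x ∈ X_{r2}`,
`(-1)^{|x ∩ x'|} = Σ_{s=0}^{N(r1,r2)} κ_s^{r1,r2} λ_s^{r1,r2}(|x \ x'|; n)`. -/
theorem stmt_18 {Ω : Type*} [Fintype Ω] [DecidableEq Ω] (n r1 r2 : ℕ)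
    (hn : Fintype.card Ω = n) (h1 : r1 ≤ n) (h2 : r2 ≤ n)
    (x' x : Finset Ω) (hx' : x'.card = r1) (hx : x.card = r2) :
    ((-1 : ℂ) ^ ((x ∩ x').card)) =
      ∑ s ∈ Finset.range (min (min r1 (n - r1)) (min r2 (n - r2)) + 1),
        kapCoef n r1 r2 s * hahn n r1 r2 s ((((x \ x').card : ℕ) : ℂ)) := by
  have hx_card : #(x ∩ x') + #(x \ x') = r2 := hx ▸ card_inter_add_card_sdiff x x'
  have hx'_card : #(x ∩ x') + #(x' \ x) = r1 := by
    rw [inter_comm, card_inter_add_card_sdiff, hx']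
  have hunion_card : #(x ∪ x') = #(x \ x') + r1 := by
    rw [← sdiff_union_self_eq_union, card_union_of_disjoint sdiff_disjoint, hx']
  have hunion_le : #(x ∪ x') ≤ n := hn ▸ card_le_univ _
  rcases le_total r2 r1 with h21 | h12
  · rw [show #(x ∩ x') = r2 - #(x \ x') by omega,
      ← sum_kapCoef_mul_hahn h1 h21 (by omega) (by omega)]
    congr 2
    omega
  · rw [show #(x ∩ x') = r1 - #(x' \ x) by omega,
      ← sum_kapCoef_mul_hahn h2 h12 (by omega) (by omega)]
    refine sum_congr (by congr 1; omega) fun s hs ↦ ?_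
    have hs := mem_range_succ_iff.1 hs
    refine kapCoef_mul_hahn_comm (by omega) (by omega) (by omega) (by omega) ?_
    exact_mod_cast (show #(x' \ x) + r2 = #(x \ x') + r1 by omega)
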